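/- arXiv:2102.02081 — 4 statements merged into one kernel-verified Lean document; each statement's English description precedes it below -/
import Mathlib

section
/- For every integer q ≥ 2 and every integer d ≥ 2, gcd(q^d + 1, q^2 - q - 1) = gcd(q^2 - q - 1, F_d · q + F_{d-1} + 1), where F_k denotes the k-th Fibonacci number. -/
theorem fib_aux (q : ℤ) (n : ℕ) : ∃ k : ℤ,
    q ^ (n + 1) = (Nat.fib (n + 1) : ℤ) * q + (Nat.fib n : ℤ) + (q ^ 2 - q - 1) * k := by
  induction n with
  | zero => exact ⟨0, by simp⟩
  | succ n ih =>
    obtain ⟨k, hk⟩ := ih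
    refine ⟨k * q + (Nat.fib (n + 1) : ℤ), ?_⟩
    rw [pow_succ, hk, Nat.fib_add_two]
    push_cast
    ring

/-- `gcd(q^d + 1, q^2 - q - 1) = gcd(q^2 - q - 1, F_d q + F_{d-1} + 1)`. -/
theorem stmt_7 (q : ℤ) (hq : 2 ≤ q) (d : ℕ) (hd : 2 ≤ d) :
    Int.gcd (q ^ d + 1) (q ^ 2 - q - 1) =
      Int.gcd (q ^ 2 - q - 1) ((Nat.fib d : ℤ) * q + (Nat.fib (d - 1) : ℤ) + 1) := by
  obtain ⟨n, rfl⟩ : ∃ n, d = n + 1 := ⟨d - 1, by omega⟩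
  obtain ⟨k, hk⟩ := fib_aux q n
  rw [Nat.add_sub_cancel, Int.gcd_comm, hk,
    show (Nat.fib (n + 1) : ℤ) * q + (Nat.fib n : ℤ) + (q ^ 2 - q - 1) * k + 1
      = ((Nat.fib (n + 1) : ℤ) * q + (Nat.fib n : ℤ) + 1) + (q ^ 2 - q - 1) * k by ring]
  simp only [Int.gcd_add_mul_left_right]
end

section
/- Let d ≥ 2 be an integer and q an integer. If t is a positive integer dividing both q^d + 1 and q^2 - q - 1, and gcd(t, F_d) = 1, then t divides F_{d+1} + F_{d-1} + 1 + (-1)^d. -/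
theorem pow_fib_aux {R : Type*} [CommRing R] (x : R) (hx : x ^ 2 = x + 1) (n : ℕ) :
    x ^ (n + 1) = (Nat.fib (n + 1) : R) * x + (Nat.fib n : R) := by
  induction n with
  | zero => simp
  | succ n ih =>
    rw [pow_succ, ih, Nat.fib_add_two]
    push_cast
    linear_combination (Nat.fib (n + 1) : R) * hx

/-- Any positive divisor `t` of `gcd(q^d + 1, q^2 - q - 1)` coprime to `F_d`
divides `F_{d+1} + F_{d-1} + 1 + (-1)^d`. -/
theorem stmt_8 (d : ℕ) (hd : 2 ≤ d) (q : ℤ) (t : ℕ) (ht : 0 < t)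
    (ht1 : (t : ℤ) ∣ q ^ d + 1) (ht2 : (t : ℤ) ∣ q ^ 2 - q - 1)
    (hcop : Nat.gcd t (Nat.fib d) = 1) :
    (t : ℤ) ∣ (Nat.fib (d + 1) : ℤ) + (Nat.fib (d - 1) : ℤ) + 1 + (-1) ^ d := by
  obtain ⟨n, rfl⟩ : ∃ n, d = n + 1 := ⟨d - 1, by omega⟩
  rw [← ZMod.intCast_zmod_eq_zero_iff_dvd] at ht1 ht2 ⊢
  push_cast at ht1 ht2 ⊢
  rw [Nat.fib_add_two]
  push_cast
  generalize (q : ZMod t) = x at ht1 ht2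
  have h1 := pow_fib_aux x (by linear_combination ht2) n
  have h2 := pow_fib_aux (1 - x) (by linear_combination ht2) n
  have h3 : x ^ (n + 1) * (1 - x) ^ (n + 1) = (-1) ^ (n + 1) := by
    rw [← mul_pow]
    congr 1
    linear_combination -ht2
  linear_combination ((1 - x) ^ (n + 1) + 1) * ht1 - h1 - h2 - h3
end

section
/- Let d ≥ 2 be an integer and let t be a positive integer dividing F_{d+1} + F_{d-1} + 1 + (-1)^d with gcd(t, F_d) = 1. Then for every integer q satisfying F_d · q + F_{d-1} + 1 ≡ 0 (mod t), the integer t divides both q^d + 1 and q^2 - q - 1, i.e., t divides gcd(q^d + 1, q^2 - q - 1). -/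
theorem cassini_aux (n : ℕ) : (Nat.fib n : ℤ) ^ 2 + Nat.fib (n + 1) * Nat.fib n
    - (Nat.fib (n + 1) : ℤ) ^ 2 = (-1) ^ (n + 1) := by
  induction n with
  | zero => simp
  | succ k ih =>
    have h : (Nat.fib (k + 1 + 1) : ℤ) = Nat.fib k + Nat.fib (k + 1) := by
      exact_mod_cast Nat.fib_add_two
    rw [h, pow_succ (-1 : ℤ) (k + 1), ← ih]
    ring

theorem pow_aux (q : ℤ) (n : ℕ) :
    q ^ 2 - q - 1 ∣ q ^ (n + 1) - (Nat.fib (n + 1) * q + Nat.fib n) := by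
  induction n with
  | zero => simp
  | succ k ih =>
    have h : (Nat.fib (k + 1 + 1) : ℤ) = Nat.fib k + Nat.fib (k + 1) := by
      exact_mod_cast Nat.fib_add_two
    obtain ⟨c, hc⟩ := ih
    refine ⟨q * c + Nat.fib (k + 1), ?_⟩
    rw [h, pow_succ]
    linear_combination q * hc

/-- Conversely, if `t` divides `F_{d+1} + F_{d-1} + 1 + (-1)^d` and is coprime
to `F_d`, then for every `q` with `F_d q + F_{d-1} + 1 ≡ 0 (mod t)`, `t` divides both
`q^d + 1` and `q^2 - q - 1`. -/
theorem stmt_9 (d : ℕ) (hd : 2 ≤ d) (t : ℕ) (ht : 0 < t)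
    (htdvd : (t : ℤ) ∣ (Nat.fib (d + 1) : ℤ) + (Nat.fib (d - 1) : ℤ) + 1 + (-1) ^ d)
    (hcop : Nat.gcd t (Nat.fib d) = 1) :
    ∀ q : ℤ, (t : ℤ) ∣ (Nat.fib d : ℤ) * q + (Nat.fib (d - 1) : ℤ) + 1 →
      (t : ℤ) ∣ q ^ d + 1 ∧ (t : ℤ) ∣ q ^ 2 - q - 1 := by
  intro q hq
  obtain ⟨n, rfl⟩ : ∃ n, d = n + 1 := ⟨d - 1, by omega⟩
  simp only [Nat.add_sub_cancel] at htdvd hq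
  have h : (Nat.fib (n + 1 + 1) : ℤ) = Nat.fib n + Nat.fib (n + 1) := by
    exact_mod_cast Nat.fib_add_two
  have hc : IsCoprime (t : ℤ) ((Nat.fib (n + 1) : ℤ) ^ 2) :=
    (Nat.isCoprime_iff_coprime.mpr hcop).pow_right
  have h2 : (t : ℤ) ∣ q ^ 2 - q - 1 := by
    apply hc.dvd_of_dvd_mul_left
    have e : (Nat.fib (n + 1) : ℤ) ^ 2 * (q ^ 2 - q - 1) =
        (Nat.fib (n + 1) * q + Nat.fib n + 1) *
          (Nat.fib (n + 1) * q - Nat.fib n - 1 - Nat.fib (n + 1)) +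
        (Nat.fib (n + 1 + 1) + Nat.fib n + 1 + (-1) ^ (n + 1)) := by
      rw [← cassini_aux n, h]
      ring
    rw [e]
    exact dvd_add (hq.mul_right _) htdvd
  refine ⟨?_, h2⟩
  have := dvd_add (h2.trans (pow_aux q n)) hq
  have e : q ^ (n + 1) + 1 = q ^ (n + 1) - ((Nat.fib (n + 1) : ℤ) * q + Nat.fib n) +
      ((Nat.fib (n + 1) : ℤ) * q + Nat.fib n + 1) := by ring
  rw [e]
  exact this
end

section
/- Let q = p^r be a prime power, let n be an even positive integer, and let F be a field with q^n elements. Suppose α ∈ F is nonzero and satisfies α^{q+2} = 1 and α^{(q^n - 1)/(q^2 - 1)} = 1. Then α^{(2^n - 1)/3} = 1. (Consequently α^H = 1 where H = gcd(q + 2, (2^n - 1)/3).) -/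
/-- For `n` even, if `α ≠ 0` satisfies `α^(q+2) = 1` and
`α^((q^n-1)/(q^2-1)) = 1`, then `α^((2^n-1)/3) = 1`. -/
theorem stmt_17 (p r q n : ℕ) (hp : p.Prime) (hr : 0 < r) (hq : q = p ^ r)
    (hn : 0 < n) (hneven : Even n)
    (F : Type*) [Field F] [Fintype F] (hF : Fintype.card F = q ^ n)
    (α : F) (hα0 : α ≠ 0) (h1 : α ^ (q + 2) = 1) (h2 : α ^ ((q ^ n - 1) / (q ^ 2 - 1)) = 1) :
    α ^ ((2 ^ n - 1) / 3) = 1 := by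
  obtain ⟨m, rfl⟩ := hneven
  have hq2 : 2 ≤ q := by
    rw [hq]
    exact hp.two_le.trans (Nat.le_self_pow hr.ne' p)
  have hqq : 2 ≤ q ^ 2 := by nlinarith
  have e1 : q ^ (m + m) = (q ^ 2) ^ m := by rw [← pow_mul, two_mul]
  have e2 : 2 ^ (m + m) = 4 ^ m := by rw [← two_mul, pow_mul]; norm_num
  have g2 := Nat.geomSum_eq (m := 4) (by norm_num) m
  rw [e1, ← Nat.geomSum_eq hqq] at h2
  rw [e2, show 3 = 4 - 1 from rfl, ← g2]
  rw [← orderOf_dvd_iff_pow_eq_one] at h1 h2 ⊢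
  have hmod : q ^ 2 ≡ 4 [MOD orderOf α] := by
    refine ((Nat.modEq_iff_dvd' (by nlinarith)).2 ?_).symm
    have : q ^ 2 - 4 = (q + 2) * (q - 2) := Nat.sq_sub_sq q 2
    rw [this]
    exact h1.mul_right _
  have hs : (∑ k ∈ Finset.range m, (q ^ 2) ^ k) ≡ ∑ k ∈ Finset.range m, 4 ^ k
      [MOD orderOf α] := by
    clear h2 g2 e1 e2 hF hn
    induction m with
    | zero => rfl
    | succ k ih =>
      rw [Finset.sum_range_succ, Finset.sum_range_succ]
      exact ih.add (hmod.pow k)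
  exact (hs.dvd_iff dvd_rfl).1 h2
end
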